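/- Define for u ∈ (0,2] and v ∈ [0,u] the interpolation error ε²(u,v) = 1 − (sinc(v)² + sinc(u−v)² − 2·sinc(u)·sinc(v)·sinc(u−v))/(1 − sinc(u)²). Then for each fixed u ∈ (0,2], the maximum of ε²(u,v) over v ∈ [0,u] is attained at v = u/2 and equals 1 − 2·sinc(u/2)²/(1 + sinc(u)). -/

import Mathlib

open Real

/-- Normalized sinc: `sinc(x) = sin(πx)/(πx)` for `x ≠ 0`, `sinc(0) = 1`. -/
noncomputable def nsinc (x : ℝ) : ℝ :=
  if x = 0 then 1 else Real.sin (π * x) / (π * x)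

/-- Two-tap interpolation error `ε²(u,v)`. -/
noncomputable def interpErr (u v : ℝ) : ℝ :=
  1 - (nsinc v ^ 2 + nsinc (u - v) ^ 2 - 2 * nsinc u * nsinc v * nsinc (u - v))
      / (1 - nsinc u ^ 2)

lemma mono_aux {f f' : ℝ → ℝ} {a b : ℝ} (hab : a ≤ b)
    (hd : ∀ t ∈ Set.Icc a b, HasDerivAt f (f' t) t)
    (hn : ∀ t ∈ Set.Icc a b, 0 ≤ f' t) : f a ≤ f b := by
  have h : MonotoneOn f (Set.Icc a b) := by
    apply monotoneOn_of_deriv_nonneg (convex_Icc a b)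
    · exact fun t ht => (hd t ht).continuousAt.continuousWithinAt
    · exact fun t ht => (hd t (interior_subset ht)).differentiableAt.differentiableWithinAt
    · intro t ht
      rw [(hd t (interior_subset ht)).deriv]
      exact hn t (interior_subset ht)
  exact h (Set.left_mem_Icc.2 hab) (Set.right_mem_Icc.2 hab) hab

lemma cusa1 {t : ℝ} (h0 : 0 ≤ t) (h1 : t ≤ π) : 0 ≤ sin t - t * cos t := by
  have := mono_aux (f := fun t => sin t - t * cos t) (f' := fun t => t * sin t) h0
    (fun t _ => by
      have := (hasDerivAt_sin t).sub ((hasDerivAt_id t).mul (hasDerivAt_cos t))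
      refine HasDerivAt.congr_deriv this ?_
      symm
      simp)
    (fun t ht => mul_nonneg ht.1 (sin_nonneg_of_nonneg_of_le_pi ht.1 (ht.2.trans h1)))
  simpa using this

lemma cusa2 {t : ℝ} (h0 : 0 ≤ t) (h1 : t ≤ π) : 0 ≤ 2 - 2 * cos t - t * sin t := by
  have := mono_aux (f := fun t => 2 - 2 * cos t - t * sin t)
    (f' := fun t => sin t - t * cos t) h0
    (fun t _ => by
      have := (((hasDerivAt_cos t).const_mul 2).const_sub 2).sub
        ((hasDerivAt_id t).mul (hasDerivAt_sin t))
      refine HasDerivAt.congr_deriv this ?_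
      symm
      simp; ring)
    (fun t ht => cusa1 ht.1 (ht.2.trans h1))
  simpa using this

lemma cusa {t : ℝ} (h0 : 0 ≤ t) : 3 * sin t ≤ 2 * t + t * cos t := by
  rcases le_total t π with h1 | h1
  · have := mono_aux (f := fun t => 2 * t + t * cos t - 3 * sin t)
      (f' := fun t => 2 - 2 * cos t - t * sin t) h0
      (fun t _ => by
        have := (((hasDerivAt_id t).const_mul 2).add
          ((hasDerivAt_id t).mul (hasDerivAt_cos t))).sub ((hasDerivAt_sin t).const_mul 3)
        refine HasDerivAt.congr_deriv this ?_
        symm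
        simp; ring)
      (fun t ht => cusa2 ht.1 (ht.2.trans h1))
    simp at this
    linarith
  · have := pi_gt_three
    nlinarith [sin_le_one t, neg_one_le_cos t]

lemma ineqA {y : ℝ} (h0 : 0 ≤ y) : 0 ≤ y ^ 2 + y * (sin y * cos y) - 2 * sin y ^ 2 := by
  have := mono_aux (f := fun y => y ^ 2 + y * (sin y * cos y) - 2 * sin y ^ 2)
    (f' := fun y => 2 * y + sin y * cos y + y * (cos y * cos y - sin y * sin y)
      - 4 * sin y * cos y) h0
    (fun t _ => by
      have := (((hasDerivAt_id t).pow 2).add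
        ((hasDerivAt_id t).mul ((hasDerivAt_sin t).mul (hasDerivAt_cos t)))).sub
        (((hasDerivAt_sin t).pow 2).const_mul 2)
      refine HasDerivAt.congr_deriv this ?_
      symm
      simp; ring)
    (fun t ht => by
      have := cusa (t := 2 * t) (by linarith [ht.1])
      rw [sin_two_mul, cos_two_mul'] at this
      nlinarith)
  simpa using this

lemma ineqB {y : ℝ} (h0 : 0 ≤ y) : 2 * y * sin y ^ 2 ≤ 3 * (y - sin y * cos y) := by
  have := cusa (t := 2 * y) (by linarith)
  rw [sin_two_mul, cos_two_mul'] at this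
  nlinarith [sin_sq_add_cos_sq y]

noncomputable def gg (y : ℝ) : ℝ := y * cos y / sin y
noncomputable def dd (y : ℝ) : ℝ := (y - sin y * cos y) / (2 * y * sin y ^ 2)

lemma gg_deriv {y : ℝ} (h0 : 0 < y) (h1 : y < π) : HasDerivAt gg (-(2 * y * dd y)) y := by
  have hs := sin_pos_of_pos_of_lt_pi h0 h1
  have := ((hasDerivAt_id y).mul (hasDerivAt_cos y)).div (hasDerivAt_sin y) hs.ne'
  refine HasDerivAt.congr_deriv this ?_
  symm
  simp only [dd, id, Pi.mul_apply]
  field_simp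
  linear_combination y * sin_sq_add_cos_sq y

lemma dd_deriv {y : ℝ} (h0 : 0 < y) (h1 : y < π) :
    HasDerivAt dd ((1 - 3 * dd y + 2 * (1 - gg y) * dd y) / y) y := by
  have hs := sin_pos_of_pos_of_lt_pi h0 h1
  have := ((hasDerivAt_id y).sub ((hasDerivAt_sin y).mul (hasDerivAt_cos y))).div
    (((hasDerivAt_id y).const_mul 2).mul ((hasDerivAt_sin y).pow 2)) (by simp; exact ⟨h0.ne', hs.ne'⟩)
  refine HasDerivAt.congr_deriv this ?_
  symm
  simp only [dd, gg, id, Pi.mul_apply, Pi.sub_apply, Pi.pow_apply]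
  have hc : cos y ^ 2 = 1 - sin y ^ 2 := by linarith [sin_sq_add_cos_sq y]
  field_simp
  ring_nf
  simp only [hc, show cos y ^ 3 = cos y * (1 - sin y ^ 2) by rw [← hc]; ring]
  ring

lemma dd_ge {y : ℝ} (h0 : 0 < y) (h1 : y < π) : 1 / 3 ≤ dd y := by
  have hs := sin_pos_of_pos_of_lt_pi h0 h1
  rw [dd, div_le_div_iff₀ (by norm_num) (by positivity)]
  linarith [ineqB h0.le]

lemma gg_anti {x h : ℝ} (h0 : 0 < x) (hx : x ≤ h) (h1 : h < π) : gg h ≤ gg x := by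
  have := mono_aux (f := fun y => - gg y) (f' := fun y => 2 * y * dd y) hx
    (fun t ht => by
      exact (gg_deriv (h0.trans_le ht.1) (ht.2.trans_lt h1)).neg.congr_deriv (by ring))
    (fun t ht => by
      have h2 := h0.trans_le ht.1
      have := dd_ge h2 (ht.2.trans_lt h1)
      positivity)
  linarith

lemma w_mono {x h : ℝ} (h0 : 0 < x) (hx : x ≤ h) (h1 : h < π) :
    (1 - gg x) / x ^ 2 ≤ (1 - gg h) / h ^ 2 := by
  refine mono_aux (f := fun y => (1 - gg y) / y ^ 2)
    (f' := fun y => (y ^ 2 + y * (sin y * cos y) - 2 * sin y ^ 2) / (sin y ^ 2 * y ^ 3)) hx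
    (fun y ht => ?_) (fun t ht => ?_)
  · have h2 := h0.trans_le ht.1
    have hs := sin_pos_of_pos_of_lt_pi h2 (ht.2.trans_lt h1)
    have := ((gg_deriv h2 (ht.2.trans_lt h1)).const_sub 1).div ((hasDerivAt_id y).pow 2)
      (by simp; exact h2.ne')
    refine HasDerivAt.congr_deriv this ?_
    symm
    simp only [dd, gg, id, Pi.pow_apply]
    field_simp
    ring
  · have h2 := h0.trans_le ht.1
    exact div_nonneg (ineqA h2.le) (by positivity)

lemma log_bound {x h : ℝ} (h0 : 0 < x) (hx : x ≤ h) (h1 : h < π) :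
    2 * log h - 2 * log (sin h) + gg h ≤ 2 * log x - 2 * log (sin x) + gg x := by
  have := mono_aux (f := fun y => - (2 * log y - 2 * log (sin y) + gg y))
    (f' := fun y => (y ^ 2 + y * (sin y * cos y) - 2 * sin y ^ 2) / (y * sin y ^ 2)) hx
    (fun y ht => by
      have h2 := h0.trans_le ht.1
      have hs := sin_pos_of_pos_of_lt_pi h2 (ht.2.trans_lt h1)
      have := ((((hasDerivAt_log h2.ne').const_mul 2).sub
        (((hasDerivAt_sin y).log hs.ne').const_mul 2)).add
        (gg_deriv h2 (ht.2.trans_lt h1))).neg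
      refine HasDerivAt.congr_deriv this ?_
      symm
      simp only [dd]
      field_simp
      ring)
    (fun t ht => by
      have h2 := h0.trans_le ht.1
      have hs := sin_pos_of_pos_of_lt_pi h2 (ht.2.trans_lt h1)
      exact div_nonneg (ineqA h2.le) (by positivity))
  linarith

lemma quad_bound {x h : ℝ} (h0 : 0 < x) (hx : x ≤ h) (h1 : h < π) :
    (h ^ 2 - x ^ 2) * dd h ≤ (gg x - gg h) + (gg x - gg h) ^ 2 / 2 := by
  have := mono_aux
    (f := fun y => (gg x - gg y) + (gg x - gg y) ^ 2 / 2 - (y ^ 2 - x ^ 2) * dd y)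
    (f' := fun y => 2 * y * dd y * (gg x - gg y)
      - (y ^ 2 - x ^ 2) * ((1 - 3 * dd y + 2 * (1 - gg y) * dd y) / y)) hx
    (fun y ht => by
      have h2 := h0.trans_le ht.1
      have h3 := ht.2.trans_lt h1
      have hg := (gg_deriv h2 h3).const_sub (gg x)
      have := (hg.add ((hg.pow 2).div_const 2)).sub
        ((((hasDerivAt_id y).pow 2).sub_const (x ^ 2)).mul (dd_deriv h2 h3))
      refine HasDerivAt.congr_deriv this ?_
      symm
      simp
      ring)
    (fun y ht => by
      have h2 := h0.trans_le ht.1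
      have h3 := ht.2.trans_lt h1
      have hd := dd_ge h2 h3
      have hw := w_mono h0 ht.1 h3
      rw [div_le_div_iff₀ (by positivity) (by positivity)] at hw
      have hk : 0 ≤ y ^ 2 - x ^ 2 := by nlinarith [ht.1]
      have e : 2 * y * dd y * (gg x - gg y)
        - (y ^ 2 - x ^ 2) * ((1 - 3 * dd y + 2 * (1 - gg y) * dd y) / y)
        = (2 * dd y * ((1 - gg y) * x ^ 2 - (1 - gg x) * y ^ 2)
          + (y ^ 2 - x ^ 2) * (3 * dd y - 1)) / y := by
        field_simp
        ring
      rw [e]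
      refine div_nonneg (add_nonneg (mul_nonneg (by linarith) (by linarith))
        (mul_nonneg hk (by linarith))) h2.le)
  simp at this
  linarith

lemma exp_bound {d : ℝ} (hd : 0 ≤ d) : (1 + d / 2) * (1 - exp (-d)) ≤ d := by
  have := mono_aux (f := fun d => d - (1 + d / 2) * (1 - exp (-d)))
    (f' := fun d => (1 - (1 + d) * exp (-d)) / 2) hd
    (fun y _ => by
      have h1 := (hasDerivAt_id y).sub ((((hasDerivAt_id y).div_const 2).const_add 1).mul
        (((hasDerivAt_id y).neg.exp).const_sub 1))
      refine HasDerivAt.congr_deriv h1 ?_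
      symm
      simp
      ring)
    (fun y _ => by
      have h1 := add_one_le_exp y
      have h2 : exp y * exp (-y) = 1 := by rw [← exp_add]; simp
      nlinarith [exp_pos (-y)])
  simp at this
  linarith

/-- The key inequality. -/
lemma key {x h : ℝ} (h0 : 0 < x) (hx : x ≤ h) (h1 : h < π) :
    (h - sin h * cos h) * (h ^ 2 - x ^ 2) * (h ^ 2 * sin x ^ 2 - x ^ 2 * sin h ^ 2)
      ≤ 2 * h ^ 3 * (x * cos x * sin h - h * cos h * sin x) ^ 2 := by
  have hh := h0.trans_le hx
  have hs := sin_pos_of_pos_of_lt_pi hh h1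
  have hsx := sin_pos_of_pos_of_lt_pi h0 (hx.trans_lt h1)
  have hk : 0 ≤ h ^ 2 - x ^ 2 := by nlinarith
  have hd := dd_ge hh h1
  have hq := quad_bound h0 hx h1
  have hl := log_bound h0 hx h1
  have hD := gg_anti h0 hx h1
  set Δ := gg x - gg h with hΔ
  have hΔ0 : 0 ≤ Δ := by linarith
  have hr : exp (-Δ) ≤ (x * sin h / (h * sin x)) ^ 2 := by
    have e : (x * sin h / (h * sin x)) ^ 2
        = exp (2 * (log x + log (sin h) - (log h + log (sin x)))) := by
      rw [← log_mul h0.ne' hs.ne', ← log_mul hh.ne' hsx.ne', ← log_div (by positivity) (by positivity),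
        two_mul, exp_add, exp_log (by positivity)]
      ring
    rw [e]
    apply exp_le_exp.2
    linarith
  set q := (x * sin h / (h * sin x)) ^ 2 with hqdef
  have hmain : (h ^ 2 - x ^ 2) * dd h * (1 - q) ≤ Δ ^ 2 := by
    have hP : 0 ≤ (h ^ 2 - x ^ 2) * dd h := mul_nonneg hk (by linarith)
    calc (h ^ 2 - x ^ 2) * dd h * (1 - q) ≤ (h ^ 2 - x ^ 2) * dd h * (1 - exp (-Δ)) :=
          mul_le_mul_of_nonneg_left (by linarith) hP
      _ ≤ (Δ + Δ ^ 2 / 2) * (1 - exp (-Δ)) :=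
          mul_le_mul_of_nonneg_right hq (by
            have : exp (-Δ) ≤ 1 := exp_le_one_iff.2 (by linarith)
            linarith)
      _ = Δ * ((1 + Δ / 2) * (1 - exp (-Δ))) := by ring
      _ ≤ Δ * Δ := mul_le_mul_of_nonneg_left (exp_bound hΔ0) hΔ0
      _ = Δ ^ 2 := by ring
  have e1 : (h - sin h * cos h) * (h ^ 2 - x ^ 2) * (h ^ 2 * sin x ^ 2 - x ^ 2 * sin h ^ 2)
      = (2 * h ^ 3 * (sin x * sin h) ^ 2) * ((h ^ 2 - x ^ 2) * dd h * (1 - q)) := by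
    simp only [hqdef, dd]
    field_simp
  have e2 : 2 * h ^ 3 * (x * cos x * sin h - h * cos h * sin x) ^ 2
      = (2 * h ^ 3 * (sin x * sin h) ^ 2) * Δ ^ 2 := by
    simp only [hΔ, gg]
    field_simp
  rw [e1, e2]
  exact mul_le_mul_of_nonneg_left hmain (by positivity)

/-- Polynomial form of the interior inequality. -/
lemma key2 {x h : ℝ} (h0 : 0 < x) (hx : x < h) (h1 : h < π) :
    2 * (1 - sin (2 * h) / (2 * h)) * (sin h / h) ^ 2 ≤
     (sin (h + x) / (h + x)) ^ 2 + (sin (h - x) / (h - x)) ^ 2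
      - 2 * (sin (2 * h) / (2 * h)) * (sin (h + x) / (h + x)) * (sin (h - x) / (h - x)) := by
  have k := key h0 hx.le h1
  have hh := h0.trans hx
  have hb : 0 < h - x := by linarith
  have ha : 0 < h + x := by linarith
  rw [sin_two_mul, sin_add, sin_sub, ← sub_nonneg]
  have e : (((sin h * cos x + cos h * sin x) / (h + x)) ^ 2 +
      ((sin h * cos x - cos h * sin x) / (h - x)) ^ 2
      - 2 * (2 * sin h * cos h / (2 * h)) * ((sin h * cos x + cos h * sin x) / (h + x))
        * ((sin h * cos x - cos h * sin x) / (h - x)))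
      - 2 * (1 - 2 * sin h * cos h / (2 * h)) * (sin h / h) ^ 2
     = 2 * (2 * h ^ 3 * (x * cos x * sin h - h * cos h * sin x) ^ 2 -
       (h - sin h * cos h) * (h ^ 2 - x ^ 2) * (h ^ 2 * sin x ^ 2 - x ^ 2 * sin h ^ 2))
        / (h ^ 3 * (h + x) ^ 2 * (h - x) ^ 2) := by
    have hch : cos h ^ 2 = 1 - sin h ^ 2 := by linarith [sin_sq_add_cos_sq h]
    have hcx : cos x ^ 2 = 1 - sin x ^ 2 := by linarith [sin_sq_add_cos_sq x]
    field_simp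
    ring_nf
    simp only [hch, hcx, show cos h ^ 3 = cos h * (1 - sin h ^ 2) by rw [← hch]; ring]
    ring
  rw [e]
  exact div_nonneg (by linarith) (by positivity)

lemma nsinc_of_ne {x : ℝ} (hx : x ≠ 0) : nsinc x = sin (π * x) / (π * x) := if_neg hx

lemma neg_lt_sin_aux {x : ℝ} (hx : 0 < x) : -x < sin x := by
  rcases le_total x π with h | h
  · linarith [sin_nonneg_of_nonneg_of_le_pi hx.le h]
  · linarith [pi_gt_three, neg_one_le_sin x]

lemma nsinc_sq_lt {u : ℝ} (hu : 0 < u) : |nsinc u| < 1 := by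
  have hp : 0 < π * u := by positivity
  rw [nsinc_of_ne hu.ne', abs_div, abs_of_pos hp, div_lt_one hp, abs_lt]
  exact ⟨neg_lt_sin_aux hp, sin_lt hp⟩

lemma num_ineq_half {u v : ℝ} (h0 : 0 < u) (h2 : u ≤ 2) (hv : u / 2 ≤ v) (hvu : v ≤ u) :
    2 * (1 - nsinc u) * nsinc (u / 2) ^ 2 ≤
      nsinc v ^ 2 + nsinc (u - v) ^ 2 - 2 * nsinc u * nsinc v * nsinc (u - v) := by
  have hs := abs_lt.1 (nsinc_sq_lt h0)
  rcases hv.eq_or_lt with rfl | hv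
  · rw [show u - u / 2 = u / 2 by ring]
    apply le_of_eq; ring
  rcases h2.eq_or_lt with rfl | h2
  · have e1 : nsinc (2 / 2) = 0 := by
      rw [show (2 / 2 : ℝ) = 1 by norm_num, nsinc_of_ne one_ne_zero]; simp
    rw [e1]
    have e2 : nsinc 2 = 0 := by
      rw [nsinc_of_ne two_ne_zero, mul_comm, sin_two_pi]; simp
    rw [e2]
    nlinarith [sq_nonneg (nsinc v), sq_nonneg (nsinc (2 - v))]
  have hpi := pi_pos
  have hc : nsinc (u / 2) = sin (π * u / 2) / (π * u / 2) := by
    rw [nsinc_of_ne (by positivity)]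
    ring_nf
  have hsu : nsinc u = sin (2 * (π * u / 2)) / (2 * (π * u / 2)) := by
    rw [nsinc_of_ne h0.ne']
    ring_nf
  rcases hvu.eq_or_lt with rfl | hvu
  · have e0 : nsinc (v - v) = 1 := by simp [nsinc]
    have hA := ineqA (y := π * v / 2) (by positivity)
    have : 2 * nsinc (v / 2) ^ 2 ≤ 1 + nsinc v := by
      rw [hc, hsu, sin_two_mul]
      have hy : 0 < π * v / 2 := by positivity
      generalize π * v / 2 = y at *
      rw [← sub_nonneg]
      have : 1 + 2 * sin y * cos y / (2 * y) - 2 * (sin y / y) ^ 2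
        = (y ^ 2 + y * (sin y * cos y) - 2 * sin y ^ 2) / y ^ 2 := by
        field_simp
      rw [this]
      positivity
    rw [e0]
    nlinarith
  · have k := key2 (x := π * (v - u / 2)) (h := π * u / 2)
      (mul_pos hpi (by linarith)) (by nlinarith) (by nlinarith)
    rw [← hc, ← hsu] at k
    have ea : nsinc v = sin (π * u / 2 + π * (v - u / 2)) / (π * u / 2 + π * (v - u / 2)) := by
      rw [nsinc_of_ne (by linarith)]; ring_nf
    have eb : nsinc (u - v) =
        sin (π * u / 2 - π * (v - u / 2)) / (π * u / 2 - π * (v - u / 2)) := by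
      rw [nsinc_of_ne (by linarith)]; ring_nf
    rw [← ea, ← eb] at k
    exact k

lemma num_ineq {u v : ℝ} (h0 : 0 < u) (h2 : u ≤ 2) (hv : 0 ≤ v) (hvu : v ≤ u) :
    2 * (1 - nsinc u) * nsinc (u / 2) ^ 2 ≤
      nsinc v ^ 2 + nsinc (u - v) ^ 2 - 2 * nsinc u * nsinc v * nsinc (u - v) := by
  rcases le_total (u / 2) v with h | h
  · exact num_ineq_half h0 h2 h hvu
  · have := num_ineq_half (v := u - v) h0 h2 (by linarith) (by linarith)
    rw [show u - (u - v) = v by ring] at this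
    linarith

/-- For fixed `u ∈ (0,2]`, the maximum of the two-tap interpolation error `ε²(u,v)`
over `v ∈ [0,u]` is attained at `v = u/2`, and equals `1 − 2 sinc(u/2)²/(1 + sinc u)`. -/
theorem stmt_5 (u : ℝ) (hu : u ∈ Set.Ioc (0 : ℝ) 2) :
    IsMaxOn (interpErr u) (Set.Icc 0 u) (u / 2) ∧
    interpErr u (u / 2) = 1 - 2 * nsinc (u / 2) ^ 2 / (1 + nsinc u) := by
  have hs := abs_lt.1 (nsinc_sq_lt hu.1)
  have hp : 0 < 1 + nsinc u := by linarith
  have hm : 0 < 1 - nsinc u := by linarith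
  have hpm : 1 - nsinc u ^ 2 = (1 - nsinc u) * (1 + nsinc u) := by ring
  constructor
  · intro v hv
    have k := num_ineq hu.1 hu.2 hv.1 hv.2
    simp only [Set.mem_ofPred_eq, interpErr]
    apply sub_le_sub_left
    apply div_le_div_of_nonneg_right _ (by rw [hpm]; positivity)
    rw [show u - u / 2 = u / 2 by ring]
    linarith
  · rw [interpErr, hpm, show u - u / 2 = u / 2 by ring]
    field_simp
    ring
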